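/- Let d ≥ 1 be an integer and let β ∈ (0, d). There exists a constant C > 0, depending only on d and β, such that for all R > 0, all t > 0, and all times 0 < s₁ < τ < t and 0 < s₂ < τ, the quantity E_{R,t}(s₁, s₂, τ) := ∫_{Q_R^4} ∫_{ℝ^{6d}} ‖ξ − ξ̃‖^{−β} ‖y₁ − ỹ₁‖^{−β} ‖y₂ − ỹ₂‖^{−β} p_{t−τ}(x₁ − ξ) p_{t−τ}(x₂ − ξ̃) p_{t−s₁}(x₃ − ỹ₁) p_{t−s₂}(x₄ − ỹ₂) p_{τ−s₁}(ξ − y₁) p_{τ−s₂}(y₂ − ξ̃) dỹ₁ dỹ₂ dξ dξ̃ dy₁ dy₂ dx₁ dx₂ dx₃ dx₄ satisfies E_{R,t}(s₁, s₂, τ) ≤ C R^{4d−3β}. -/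

import Mathlib

open MeasureTheory

noncomputable def heatKernel (d : ℕ) (t : ℝ) (x : EuclideanSpace ℝ (Fin d)) : ℝ :=
  (2 * Real.pi * t) ^ (-(d : ℝ) / 2) * Real.exp (-‖x‖ ^ 2 / (2 * t))

def box (d : ℕ) (R : ℝ) : Set (EuclideanSpace ℝ (Fin d)) :=
  {x | ∀ i, |x i| ≤ R}

/-!
Take the arguments of the six heat kernels as new integration variables: they become independent,
and `E_{R,t}` is the integral over the endpoints in the box of the mean of a product of three Riesz
factors. Integrate over `x₄`, `x₃`, `x₂` in this order; each time exactly one remaining Riesz factor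
contains the endpoint, and its integral over the box is at most a constant times `R ^ (d - β)`,
wherever it is centred. The endpoint `x₁` contributes the volume of the box. The heat kernels enter
only through their total mass, so any measurable functions of `L¹` norm at most one will do.
-/

open Metric Module
open scoped ENNReal Pointwise

section RieszKernel

variable {E : Type*} [NormedAddCommGroup E] [NormedSpace ℝ E] [FiniteDimensional ℝ E]
  [MeasurableSpace E] [BorelSpace E] (μ : Measure E) [μ.IsAddHaarMeasure]

theorem setLIntegral_smul_set {R : ℝ} (hR : 0 < R) (s : Set E) (f : E → ℝ≥0∞) :
    ∫⁻ x in R • s, f x ∂μ = ENNReal.ofReal (R ^ finrank ℝ E) * ∫⁻ x in s, f (R • x) ∂μ := by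
  have hemb : MeasurableEmbedding (R • · : E → E) :=
    (Homeomorph.smulOfNeZero R hR.ne').measurableEmbedding
  have hpow : 0 < R ^ finrank ℝ E := pow_pos hR _
  have hscale : ∫⁻ x in s, f (R • x) ∂μ
      = ENNReal.ofReal (R ^ finrank ℝ E)⁻¹ * ∫⁻ x in R • s, f x ∂μ := by
    rw [← smul_eq_mul, ← setLIntegral_smul_measure, ← abs_of_pos (inv_pos.2 hpow),
      ← Measure.map_addHaar_smul μ hR.ne', hemb.restrict_map, hemb.lintegral_map,
      Set.preimage_smul₀ hR.ne', inv_smul_smul₀ hR.ne']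
  rw [hscale, ← mul_assoc, ← ENNReal.ofReal_mul hpow.le, mul_inv_cancel₀ hpow.ne',
    ENNReal.ofReal_one, one_mul]

variable {β : ℝ}

theorem integrableOn_ball_norm_rpow_neg [Nontrivial E] (hβ : β < finrank ℝ E) :
    IntegrableOn (fun y : E => ‖y‖ ^ (-β)) (ball 0 1) μ := by
  rw [integrableOn_fun_norm_addHaar μ (f := fun r : ℝ => r ^ (-β))]
  have hradial : IntegrableOn (fun r : ℝ => r ^ ((finrank ℝ E : ℝ) - 1 - β)) (Set.Ioo 0 1) :=
    (intervalIntegral.integrableOn_Ioo_rpow_iff one_pos).2 (by linarith)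
  refine hradial.congr_fun (fun r hr => ?_) measurableSet_Ioo
  rw [smul_eq_mul, ← Real.rpow_natCast, ← Real.rpow_add hr.1,
    Nat.cast_pred finrank_pos, sub_eq_add_neg _ β]

theorem setLIntegral_enorm_norm_sub_rpow_neg_le (hβ : 0 ≤ β) (B : Set E) (z : E) :
    ∫⁻ x in B, ‖‖z - x‖ ^ (-β)‖ₑ ∂μ ≤ ∫⁻ y in ball 0 1, ‖‖y‖ ^ (-β)‖ₑ ∂μ + μ B := by
  set k : E → ℝ≥0∞ := (ball 0 1).indicator fun y => ‖‖y‖ ^ (-β)‖ₑ with hk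
  have hsplit (y : E) : ‖‖y‖ ^ (-β)‖ₑ ≤ k y + 1 := by
    by_cases hy : y ∈ ball (0 : E) 1
    · simp [hk, Set.indicator_of_mem hy]
    · have hy1 : 1 ≤ ‖y‖ := by simpa using hy
      rw [hk, Set.indicator_of_notMem hy, zero_add, Real.enorm_of_nonneg (by positivity),
        ENNReal.ofReal_le_one]
      exact Real.rpow_le_one_of_one_le_of_nonpos hy1 (neg_nonpos.2 hβ)
  calc ∫⁻ x in B, ‖‖z - x‖ ^ (-β)‖ₑ ∂μ
      ≤ ∫⁻ x in B, (k (z - x) + 1) ∂μ := lintegral_mono fun x => hsplit (z - x)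
    _ = ∫⁻ x in B, k (z - x) ∂μ + μ B := by
      rw [lintegral_add_right _ measurable_const, setLIntegral_one]
    _ ≤ ∫⁻ x, k (z - x) ∂μ + μ B := by gcongr; exact Measure.restrict_le_self
    _ = ∫⁻ y in ball 0 1, ‖‖y‖ ^ (-β)‖ₑ ∂μ + μ B := by
      rw [lintegral_sub_left_eq_self k z, hk, lintegral_indicator measurableSet_ball]

theorem exists_setLIntegral_smul_set_norm_sub_rpow_neg_le (hβ0 : 0 ≤ β) (hβ : β < finrank ℝ E)
    {B : Set E} (hB : μ B ≠ ∞) :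
    ∃ K : ℝ≥0∞, K ≠ ∞ ∧ ∀ R : ℝ, 0 < R → ∀ z : E,
      ∫⁻ x in R • B, ‖‖z - x‖ ^ (-β)‖ₑ ∂μ ≤ ENNReal.ofReal (R ^ (finrank ℝ E - β)) * K := by
  have : Nontrivial E := finrank_pos_iff.1 (by exact_mod_cast hβ0.trans_lt hβ)
  refine ⟨_, ENNReal.add_ne_top.2 ⟨(integrableOn_ball_norm_rpow_neg μ hβ).2.ne, hB⟩,
    fun R hR z => ?_⟩
  have hhom (x : E) : ‖‖z - R • x‖ ^ (-β)‖ₑ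
      = ENNReal.ofReal (R ^ (-β)) * ‖‖R⁻¹ • z - x‖ ^ (-β)‖ₑ := by
    rw [← Real.enorm_of_nonneg (by positivity), ← enorm_mul,
      ← Real.mul_rpow hR.le (norm_nonneg _), ← norm_smul_of_nonneg hR.le, smul_sub,
      smul_inv_smul₀ hR.ne']
  rw [setLIntegral_smul_set μ hR]
  simp_rw [hhom]
  rw [lintegral_const_mul' _ _ ENNReal.ofReal_ne_top, ← mul_assoc,
    ← ENNReal.ofReal_mul (by positivity), ← Real.rpow_natCast, ← Real.rpow_add hR,
    ← sub_eq_add_neg]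
  gcongr
  exact setLIntegral_enorm_norm_sub_rpow_neg_le μ hβ0 B _

end RieszKernel

section Energy

/-- The integrand of `E_{R,t}(s₁, s₂, τ)`, with an arbitrary kernel `k` in place of the Riesz
kernel and arbitrary functions `p 0, …, p 5` in place of the six heat kernels, in the paper's order.
The values are in `ℝ` for the integral itself and in `ℝ≥0∞` for its absolute convergence. -/
def energyIntegrand {G 𝕜 : Type*} [Sub G] [Mul 𝕜] (k : G → 𝕜) (p : Fin 6 → G → 𝕜)
    (x₁ x₂ x₃ x₄ ytil₁ ytil₂ ξ ξtil y₁ y₂ : G) : 𝕜 :=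
  k (ξ - ξtil) * k (y₁ - ytil₁) * k (y₂ - ytil₂) *
    p 0 (x₁ - ξ) * p 1 (x₂ - ξtil) * p 2 (x₃ - ytil₁) * p 3 (x₄ - ytil₂) *
    p 4 (ξ - y₁) * p 5 (y₂ - ξtil)

/-- The joint density of independent displacements, listed in the order
`(x₃ - ytil₁, x₄ - ytil₂, x₁ - ξ, x₂ - ξtil, ξ - y₁, y₂ - ξtil)` in which the variables of
`energyIntegrand` are integrated. -/
noncomputable def displacementDensity {G : Type*} (p : Fin 6 → G → ℝ≥0∞)
    (w : G × G × G × G × G × G) : ℝ≥0∞ :=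
  p 2 w.1 * (p 3 w.2.1 * (p 0 w.2.2.1 * (p 1 w.2.2.2.1 * (p 4 w.2.2.2.2.1 * p 5 w.2.2.2.2.2))))

theorem enorm_energyIntegrand {G : Type*} [Sub G] (k : G → ℝ) (p : Fin 6 → G → ℝ)
    (x₁ x₂ x₃ x₄ ytil₁ ytil₂ ξ ξtil y₁ y₂ : G) :
    ‖energyIntegrand k p x₁ x₂ x₃ x₄ ytil₁ ytil₂ ξ ξtil y₁ y₂‖ₑ
      = energyIntegrand (‖k ·‖ₑ) (fun i y => ‖p i y‖ₑ)
          x₁ x₂ x₃ x₄ ytil₁ ytil₂ ξ ξtil y₁ y₂ := by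
  simp only [energyIntegrand, enorm_mul]

theorem lintegral_prod_six {α : Type*} [MeasureSpace α] [SFinite (volume : Measure α)]
    {f : α × α × α × α × α × α → ℝ≥0∞} (hf : Measurable f) :
    ∫⁻ w, f w = ∫⁻ a, ∫⁻ b, ∫⁻ c, ∫⁻ e, ∫⁻ g, ∫⁻ h, f (a, b, c, e, g, h) := by
  rw [Measure.volume_eq_prod, lintegral_prod _ hf.aemeasurable]
  refine lintegral_congr fun a => ?_
  rw [Measure.volume_eq_prod, lintegral_prod _ (by fun_prop)]
  refine lintegral_congr fun b => ?_
  rw [Measure.volume_eq_prod, lintegral_prod _ (by fun_prop)]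
  refine lintegral_congr fun c => ?_
  rw [Measure.volume_eq_prod, lintegral_prod _ (by fun_prop)]
  refine lintegral_congr fun e => ?_
  rw [Measure.volume_eq_prod, lintegral_prod _ (by fun_prop)]

theorem measurable_displacementDensity {G : Type*} [MeasurableSpace G] {p : Fin 6 → G → ℝ≥0∞}
    (hp : ∀ i, Measurable (p i)) : Measurable (displacementDensity p) := by
  unfold displacementDensity
  fun_prop

theorem lintegral_displacementDensity {G : Type*} [MeasureSpace G] [SFinite (volume : Measure G)]
    {p : Fin 6 → G → ℝ≥0∞} (hp : ∀ i, Measurable (p i)) :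
    ∫⁻ w, displacementDensity p w = ∏ i, ∫⁻ y, p i y := by
  rw [lintegral_prod_six (measurable_displacementDensity hp)]
  simp only [displacementDensity]
  simp (disch := fun_prop) only [lintegral_const_mul, lintegral_mul_const]
  rw [Fin.prod_univ_six]
  ring

variable {G : Type*} [AddCommGroup G]

theorem setLIntegral_lintegral_kernel_sub_mul_le [MeasurableSpace G] [MeasurableSub₂ G]
    {μ : Measure G} [SFinite μ] {Ω : Type*} [MeasurableSpace Ω] {ν : Measure Ω} [SFinite ν]
    {k : G → ℝ≥0∞} (hk : Measurable k) {B : Set G} {M : ℝ≥0∞}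
    (hM : ∀ z, ∫⁻ x in B, k (z - x) ∂μ ≤ M) {q : Ω → ℝ≥0∞} (hq : Measurable q)
    {l : Ω → G} (hl : Measurable l) :
    ∫⁻ x in B, ∫⁻ w, k (l w - x) * q w ∂ν ∂μ ≤ M * ∫⁻ w, q w ∂ν := by
  calc ∫⁻ x in B, ∫⁻ w, k (l w - x) * q w ∂ν ∂μ
      = ∫⁻ w, (∫⁻ x in B, k (l w - x) ∂μ) * q w ∂ν := by
        rw [lintegral_lintegral_swap (by fun_prop)]
        exact lintegral_congr fun w => lintegral_mul_const _ (by fun_prop)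
    _ ≤ ∫⁻ w, M * q w ∂ν := lintegral_mono fun w => mul_le_mul_left (hM _) _
    _ = M * ∫⁻ w, q w ∂ν := lintegral_const_mul _ hq

theorem setLIntegral_lintegral_three_kernels_le [MeasurableSpace G] [MeasurableSub₂ G]
    {μ : Measure G} [SFinite μ] {Ω : Type*} [MeasurableSpace Ω] {ν : Measure Ω} [SFinite ν]
    {k : G → ℝ≥0∞} (hk : Measurable k) {B : Set G} {M : ℝ≥0∞} (hM_ne_top : M ≠ ∞)
    (hM : ∀ z, ∫⁻ x in B, k (z - x) ∂μ ≤ M) {q : Ω → ℝ≥0∞} (hq : Measurable q)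
    {l₂ l₃ : Ω → G} {l₄ : G → Ω → G} (hl₂ : Measurable l₂) (hl₃ : Measurable l₃)
    (hl₄ : ∀ x₂, Measurable (l₄ x₂)) :
    ∫⁻ x₂ in B, ∫⁻ x₃ in B, ∫⁻ x₄ in B, ∫⁻ w,
        k (l₄ x₂ w - x₄) * (k (l₃ w - x₃) * (k (l₂ w - x₂) * q w)) ∂ν ∂μ ∂μ ∂μ
      ≤ M ^ 3 * ∫⁻ w, q w ∂ν := by
  calc _ ≤ ∫⁻ x₂ in B, ∫⁻ x₃ in B,
          M * ∫⁻ w, k (l₃ w - x₃) * (k (l₂ w - x₂) * q w) ∂ν ∂μ ∂μ :=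
        lintegral_mono fun x₂ => lintegral_mono fun x₃ =>
          setLIntegral_lintegral_kernel_sub_mul_le hk hM (by fun_prop) (hl₄ x₂)
    _ ≤ ∫⁻ x₂ in B, M * (M * ∫⁻ w, k (l₂ w - x₂) * q w ∂ν) ∂μ := by
        refine lintegral_mono fun x₂ => ?_
        simp only [lintegral_const_mul' _ _ hM_ne_top]
        gcongr
        exact setLIntegral_lintegral_kernel_sub_mul_le hk hM (by fun_prop) hl₃
    _ ≤ M * (M * (M * ∫⁻ w, q w ∂ν)) := by
        simp only [lintegral_const_mul' _ _ hM_ne_top]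
        gcongr
        exact setLIntegral_lintegral_kernel_sub_mul_le hk hM hq hl₂
    _ = M ^ 3 * ∫⁻ w, q w ∂ν := by ring

variable [MeasureSpace G] [MeasurableAdd₂ G] [MeasurableNeg G] [SFinite (volume : Measure G)]
  [(volume : Measure G).IsAddLeftInvariant] [(volume : Measure G).IsNegInvariant]
  {k : G → ℝ≥0∞} {p : Fin 6 → G → ℝ≥0∞}

-- The translations turn the arguments of the functions `p j` into independent variables; each
-- factor `k` on the right then depends on an endpoint that no factor to the right of it contains.
theorem lintegral_energyIntegrand (hk : Measurable k) (hp : ∀ i, Measurable (p i))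
    (x₁ x₂ x₃ x₄ : G) :
    ∫⁻ ytil₁, ∫⁻ ytil₂, ∫⁻ ξ, ∫⁻ ξtil, ∫⁻ y₁, ∫⁻ y₂,
        energyIntegrand k p x₁ x₂ x₃ x₄ ytil₁ ytil₂ ξ ξtil y₁ y₂
      = ∫⁻ w : G × G × G × G × G × G,
        k ((x₂ - w.2.2.2.1 + w.2.2.2.2.2 + w.2.1) - x₄) *
          (k ((x₁ - w.2.2.1 - w.2.2.2.2.1 + w.1) - x₃) *
            (k ((x₁ - w.2.2.1 + w.2.2.2.1) - x₂) * displacementDensity p w)) := by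
  have hq := measurable_displacementDensity hp
  rw [lintegral_prod_six (by fun_prop), ← lintegral_sub_left_eq_self _ x₃]
  refine lintegral_congr fun a => ?_
  rw [← lintegral_sub_left_eq_self _ x₄]
  refine lintegral_congr fun b => ?_
  rw [← lintegral_sub_left_eq_self _ x₁]
  refine lintegral_congr fun c => ?_
  rw [← lintegral_sub_left_eq_self _ x₂]
  refine lintegral_congr fun e => ?_
  rw [← lintegral_sub_left_eq_self _ (x₁ - c)]
  refine lintegral_congr fun g => ?_
  rw [← lintegral_add_left_eq_self _ (x₂ - e)]
  refine lintegral_congr fun h => ?_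
  have hξ : x₁ - c - (x₂ - e) = x₁ - c + e - x₂ := by abel
  have hy₁ : x₁ - c - g - (x₃ - a) = x₁ - c - g + a - x₃ := by abel
  have hy₂ : x₂ - e + h - (x₄ - b) = x₂ - e + h + b - x₄ := by abel
  simp only [energyIntegrand, displacementDensity, sub_sub_cancel, add_sub_cancel_left,
    hξ, hy₁, hy₂]
  ring

theorem setLIntegral_energyIntegrand_le (hk : Measurable k) (hp : ∀ i, Measurable (p i))
    {B : Set G} {M : ℝ≥0∞} (hM_ne_top : M ≠ ∞) (hM : ∀ z, ∫⁻ x in B, k (z - x) ≤ M) :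
    ∫⁻ x₁ in B, ∫⁻ x₂ in B, ∫⁻ x₃ in B, ∫⁻ x₄ in B,
      ∫⁻ ytil₁, ∫⁻ ytil₂, ∫⁻ ξ, ∫⁻ ξtil, ∫⁻ y₁, ∫⁻ y₂,
        energyIntegrand k p x₁ x₂ x₃ x₄ ytil₁ ytil₂ ξ ξtil y₁ y₂
      ≤ M ^ 3 * (∏ i, ∫⁻ y, p i y) * volume B := by
  simp only [lintegral_energyIntegrand hk hp]
  rw [← setLIntegral_const, ← lintegral_displacementDensity hp]
  exact lintegral_mono fun x₁ =>
    setLIntegral_lintegral_three_kernels_le hk hM_ne_top hM (measurable_displacementDensity hp)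
      (by fun_prop) (by fun_prop) (by fun_prop)

theorem enorm_integral_energyIntegrand_le {k : G → ℝ} {p : Fin 6 → G → ℝ} (hk : Measurable k)
    (hp : ∀ i, Measurable (p i)) {B : Set G} {M : ℝ≥0∞} (hM_ne_top : M ≠ ∞)
    (hM : ∀ z, ∫⁻ x in B, ‖k (z - x)‖ₑ ≤ M) :
    ‖∫ x₁ in B, ∫ x₂ in B, ∫ x₃ in B, ∫ x₄ in B,
      ∫ ytil₁, ∫ ytil₂, ∫ ξ, ∫ ξtil, ∫ y₁, ∫ y₂,
        energyIntegrand k p x₁ x₂ x₃ x₄ ytil₁ ytil₂ ξ ξtil y₁ y₂‖ₑ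
      ≤ M ^ 3 * (∏ i, eLpNorm (p i) 1 volume) * volume B := by
  simp only [eLpNorm_one_eq_lintegral_enorm]
  refine le_trans ?_ (setLIntegral_energyIntegrand_le hk.enorm (fun i => (hp i).enorm) hM_ne_top hM)
  iterate 10 refine (enorm_integral_le_lintegral_enorm _).trans (lintegral_mono fun _ => ?_)
  exact (enorm_energyIntegrand ..).le

end Energy

section BoxHeatKernel

theorem smul_box_one (d : ℕ) {R : ℝ} (hR : 0 < R) : R • box d 1 = box d R := by
  ext x
  simp [Set.mem_smul_set_iff_inv_smul_mem₀ hR.ne', box, abs_mul, abs_of_pos hR,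
    inv_mul_le_iff₀ hR]

theorem volume_box_ne_top (d : ℕ) (R : ℝ) : volume (box d R) ≠ ∞ := by
  have hbox : box d R ⊆ WithLp.ofLp ⁻¹' closedBall (0 : Fin d → ℝ) |R| := fun x hx => by
    simpa [pi_norm_le_iff_of_nonneg (abs_nonneg R)] using fun i => (hx i).trans (le_abs_self R)
  refine measure_ne_top_of_subset hbox ?_
  rw [(PiLp.volume_preserving_ofLp (Fin d)).measure_preimage
    measurableSet_closedBall.nullMeasurableSet]
  exact measure_closedBall_lt_top.ne

variable {d : ℕ} {t : ℝ}

theorem measurable_heatKernel : Measurable (heatKernel d t) := by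
  unfold heatKernel
  fun_prop

theorem heatKernel_nonneg (ht : 0 ≤ t) (x : EuclideanSpace ℝ (Fin d)) : 0 ≤ heatKernel d t x := by
  unfold heatKernel
  positivity

theorem integral_heatKernel (ht : 0 < t) : ∫ x, heatKernel d t x = 1 := by
  have hgauss := GaussianFourier.integral_rexp_neg_mul_sq_norm (V := EuclideanSpace ℝ (Fin d))
    (b := (2 * t)⁻¹) (by positivity)
  have hexp (x : EuclideanSpace ℝ (Fin d)) : -‖x‖ ^ 2 / (2 * t) = -(2 * t)⁻¹ * ‖x‖ ^ 2 := by ring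
  simp only [heatKernel, hexp]
  rw [integral_const_mul, hgauss, finrank_euclideanSpace_fin, div_inv_eq_mul,
    show Real.pi * (2 * t) = 2 * Real.pi * t by ring, ← Real.rpow_add (by positivity), neg_div,
    neg_add_cancel, Real.rpow_zero]

theorem eLpNorm_heatKernel (ht : 0 < t) : eLpNorm (heatKernel d t) 1 volume = 1 := by
  have hint := integrable_of_integral_eq_one (integral_heatKernel (d := d) ht)
  rw [eLpNorm_one_eq_lintegral_enorm, ← ofReal_integral_norm_eq_lintegral_enorm hint]
  simp only [Real.norm_of_nonneg (heatKernel_nonneg ht.le _), integral_heatKernel ht,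
    ENNReal.ofReal_one]

end BoxHeatKernel

theorem stmt_9_general {E : Type*} [NormedAddCommGroup E] [NormedSpace ℝ E]
    [FiniteDimensional ℝ E] [MeasureSpace E] [BorelSpace E]
    [(volume : Measure E).IsAddHaarMeasure] {B : Set E} (hB : volume B ≠ ∞)
    {β : ℝ} (hβ0 : 0 ≤ β) (hβ : β < finrank ℝ E) :
    ∃ C : ℝ, 0 < C ∧ ∀ R : ℝ, 0 < R → ∀ p : Fin 6 → E → ℝ,
      (∀ i, Measurable (p i)) → (∀ i, eLpNorm (p i) 1 volume ≤ 1) →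
      |∫ x₁ in R • B, ∫ x₂ in R • B, ∫ x₃ in R • B, ∫ x₄ in R • B,
        ∫ ytil₁, ∫ ytil₂, ∫ ξ, ∫ ξtil, ∫ y₁, ∫ y₂,
          energyIntegrand (‖·‖ ^ (-β)) p x₁ x₂ x₃ x₄ ytil₁ ytil₂ ξ ξtil y₁ y₂| ≤
        C * R ^ (4 * (finrank ℝ E : ℝ) - 3 * β) := by
  obtain ⟨K, hK, hriesz⟩ := exists_setLIntegral_smul_set_norm_sub_rpow_neg_le volume hβ0 hβ hB
  have hfin : K ^ 3 * volume B ≠ ∞ := by finiteness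
  refine ⟨(K ^ 3 * volume B).toReal + 1, by positivity, fun R hR p hp hp1 => ?_⟩
  set d : ℝ := (finrank ℝ E : ℝ)
  have hpow : R ^ (4 * d - 3 * β) = (R ^ (d - β)) ^ 3 * R ^ finrank ℝ E := by
    rw [← Real.rpow_natCast, ← Real.rpow_natCast, ← Real.rpow_mul hR.le, ← Real.rpow_add hR]
    congr 1
    push_cast
    ring
  rw [← Real.norm_eq_abs, ← ENNReal.ofReal_le_ofReal_iff (by positivity), ofReal_norm]
  calc _ ≤ (ENNReal.ofReal (R ^ (d - β)) * K) ^ 3 * (∏ i, eLpNorm (p i) 1 volume)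
          * volume (R • B) :=
        enorm_integral_energyIntegrand_le (by fun_prop) hp (by finiteness) (hriesz R hR)
    _ ≤ (ENNReal.ofReal (R ^ (d - β)) * K) ^ 3 * 1 * volume (R • B) := by
        gcongr
        exact Finset.prod_le_one' fun i _ => hp1 i
    _ = ENNReal.ofReal ((K ^ 3 * volume B).toReal * R ^ (4 * d - 3 * β)) := by
        rw [Measure.addHaar_smul, abs_of_pos (by positivity), hpow,
          ENNReal.ofReal_mul ENNReal.toReal_nonneg, ENNReal.ofReal_toReal hfin,
          ENNReal.ofReal_mul (by positivity),
          ENNReal.ofReal_pow (p := R ^ (d - β)) (by positivity)]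
        ring
    _ ≤ ENNReal.ofReal (((K ^ 3 * volume B).toReal + 1) * R ^ (4 * d - 3 * β)) := by
        gcongr
        exact le_add_of_nonneg_right zero_le_one

theorem stmt_9 (d : ℕ) (hd : 1 ≤ d) (β : ℝ) (hβ0 : 0 < β) (hβd : β < d) :
    ∃ C : ℝ, 0 < C ∧ ∀ R : ℝ, 0 < R → ∀ t τ s₁ s₂ : ℝ,
      0 < s₁ → s₁ < τ → τ < t → 0 < s₂ → s₂ < τ →
      (∫ x₁ in box d R, ∫ x₂ in box d R, ∫ x₃ in box d R, ∫ x₄ in box d R,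
          ∫ ytil₁ : EuclideanSpace ℝ (Fin d), ∫ ytil₂ : EuclideanSpace ℝ (Fin d),
          ∫ ξ : EuclideanSpace ℝ (Fin d), ∫ ξtil : EuclideanSpace ℝ (Fin d),
          ∫ y₁ : EuclideanSpace ℝ (Fin d), ∫ y₂ : EuclideanSpace ℝ (Fin d),
            ‖ξ - ξtil‖ ^ (-β) * ‖y₁ - ytil₁‖ ^ (-β) * ‖y₂ - ytil₂‖ ^ (-β) *
              heatKernel d (t - τ) (x₁ - ξ) * heatKernel d (t - τ) (x₂ - ξtil) *
              heatKernel d (t - s₁) (x₃ - ytil₁) * heatKernel d (t - s₂) (x₄ - ytil₂) *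
              heatKernel d (τ - s₁) (ξ - y₁) * heatKernel d (τ - s₂) (y₂ - ξtil)) ≤
        C * R ^ (4 * (d : ℝ) - 3 * β) := by
  obtain ⟨C, hC, hbound⟩ := stmt_9_general (volume_box_ne_top d 1) hβ0.le
    (by simpa only [finrank_euclideanSpace_fin] using hβd)
  refine ⟨C, hC, fun R hR t τ s₁ s₂ _ hs₁ hτ _ hs₂ => ?_⟩
  set u : Fin 6 → ℝ := ![t - τ, t - τ, t - s₁, t - s₂, τ - s₁, τ - s₂]
  have hu (i : Fin 6) : 0 < u i := by fin_cases i <;> simp [u] <;> linarith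
  have hE := hbound R hR (fun i => heatKernel d (u i)) (fun _ => measurable_heatKernel)
    fun i => (eLpNorm_heatKernel (hu i)).le
  rw [smul_box_one d hR, finrank_euclideanSpace_fin] at hE
  exact (le_abs_self _).trans hE
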